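/- arXiv:2507.09496 — 2 statements merged into one kernel-verified Lean document; each statement's English description precedes it below -/
import Mathlib

section
/- Let (X_i)_{i≥1} be i.i.d. standard normal random variables, X_{(n)} = max_{1≤i≤n} X_i, and Y_n = a_n(X_{(n)} - b_n) with a_n = √(2 log n) and b_n = √(2 log n) - (log log n + log(4π))/(2√(2 log n)). Then sup_{x∈ℝ} |P(Y_n ≤ x) - exp(-e^{-x})| = ((log log n)²/(16 e log n))(1 + o(1)) as n → ∞, i.e. the ratio of the left-hand side to (log log n)²/(16 e log n) tends to 1. -/
open MeasureTheory Filter Real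

/-- The standard normal cumulative distribution function. -/
noncomputable def stdNormalCDF (x : ℝ) : ℝ :=
  ∫ t in Set.Iic x, Real.exp (-t ^ 2 / 2) / Real.sqrt (2 * Real.pi)

/-- Scaling constant `a_n = √(2 log n)`. -/
noncomputable def aSeq (n : ℕ) : ℝ := Real.sqrt (2 * Real.log n)

/-- Centering constant
`b_n = √(2 log n) - (log log n + log (4π)) / (2 √(2 log n))`. -/
noncomputable def bSeq (n : ℕ) : ℝ :=
  aSeq n - (Real.log (Real.log n) + Real.log (4 * Real.pi)) / (2 * aSeq n)

/-- The CDF of `Y_n = a_n (X_{(n)} - b_n)` where `X_{(n)}` is the maximum of `n`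
i.i.d. standard normal random variables: `P(Y_n ≤ x) = Φ(b_n + x/a_n)^n`. -/
noncomputable def Fmax (n : ℕ) (x : ℝ) : ℝ := stdNormalCDF (bSeq n + x / aSeq n) ^ n

noncomputable def phiD (t : ℝ) : ℝ := Real.exp (-t ^ 2 / 2) / Real.sqrt (2 * Real.pi)

lemma phiD_pos (t : ℝ) : 0 < phiD t := by unfold phiD; positivity

lemma phiD_integrable : Integrable phiD := by
  have h := (integrable_exp_neg_mul_sq (b := 1/2) (by norm_num)).div_const (Real.sqrt (2 * Real.pi))
  refine h.congr (Eventually.of_forall fun t => ?_)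
  simp only [phiD]
  congr 2; ring

lemma phiD_integral : ∫ t, phiD t = 1 := by
  have h : ∀ t, phiD t = Real.exp (-(1/2) * t ^ 2) / Real.sqrt (2 * Real.pi) := by
    intro t; simp only [phiD]; congr 2; ring
  simp_rw [h]
  rw [integral_div, integral_gaussian]
  rw [show Real.pi / (1/2) = 2 * Real.pi by ring]
  exact div_self (by positivity)

lemma cdf_eq (u : ℝ) : stdNormalCDF u = 1 - ∫ t in Set.Ioi u, phiD t := by
  have h := intervalIntegral.integral_Iic_add_Ioi (b := u) (f := phiD) phiD_integrable.integrableOn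
    phiD_integrable.integrableOn
  rw [phiD_integral] at h
  have : stdNormalCDF u = ∫ t in Set.Iic u, phiD t := rfl
  linarith

lemma cdf_nonneg (u : ℝ) : 0 ≤ stdNormalCDF u :=
  setIntegral_nonneg measurableSet_Iic fun t _ => (phiD_pos t).le

lemma cdf_le_one (u : ℝ) : stdNormalCDF u ≤ 1 := by
  rw [cdf_eq]
  have : 0 ≤ ∫ t in Set.Ioi u, phiD t := setIntegral_nonneg measurableSet_Ioi fun t _ => (phiD_pos t).le
  linarith

lemma cdf_mono : Monotone stdNormalCDF := by
  intro u v h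
  exact setIntegral_mono_set (f := phiD) phiD_integrable.integrableOn
    (Eventually.of_forall fun t => (phiD_pos t).le) (Set.Iic_subset_Iic.2 h).eventuallyLE

lemma phiD_deriv (t : ℝ) : HasDerivAt phiD (-t * phiD t) t := by
  have h : HasDerivAt (fun t : ℝ => -t ^ 2 / 2) (-t) t := by
    have := ((hasDerivAt_pow 2 t).neg).div_const 2
    refine this.congr_deriv ?_
    norm_num
    try ring
  have := (h.exp).div_const (Real.sqrt (2 * Real.pi))
  refine this.congr_deriv ?_
  simp only [phiD]; ring

lemma phiD_tendsto : Tendsto phiD atTop (nhds 0) := by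
  have h : Tendsto (fun t : ℝ => -t ^ 2 / 2) atTop atBot := by
    have h1 : Tendsto (fun t : ℝ => t ^ 2 / 2) atTop atTop :=
      (tendsto_pow_atTop (by norm_num)).atTop_div_const (by norm_num)
    have := tendsto_neg_atTop_atBot.comp h1
    refine this.congr fun t => ?_
    simp only [Function.comp]; ring
  have := (Real.tendsto_exp_atBot.comp h).div_const (Real.sqrt (2 * Real.pi))
  rw [zero_div] at this
  exact this

lemma mills (u : ℝ) (hu : 0 < u) :
    phiD u / u * (1 - 1 / u ^ 2) ≤ 1 - stdNormalCDF u ∧ 1 - stdNormalCDF u ≤ phiD u / u := by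
  have hd : ∀ t ∈ Set.Ici u, HasDerivAt (fun t => - (phiD t / t)) (phiD t * (1 + 1 / t ^ 2)) t := by
    intro t ht
    have ht0 : 0 < t := lt_of_lt_of_le hu ht
    have := ((phiD_deriv t).div (hasDerivAt_id t) ht0.ne').neg
    refine this.congr_deriv ?_
    simp only [id]
    field_simp
    ring
  have hpos : ∀ t ∈ Set.Ioi u, 0 ≤ phiD t * (1 + 1 / t ^ 2) := by
    intro t _; have := phiD_pos t; positivity
  have hlim : Tendsto (fun t => - (phiD t / t)) atTop (nhds 0) := by
    have := (phiD_tendsto.mul tendsto_inv_atTop_zero).neg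
    simpa [div_eq_mul_inv] using this
  have hInt := integrableOn_Ioi_deriv_of_nonneg' hd hpos hlim
  have hval := integral_Ioi_of_hasDerivAt_of_nonneg' hd hpos hlim
  have hq : 1 - stdNormalCDF u = ∫ t in Set.Ioi u, phiD t := by rw [cdf_eq]; ring
  have hup : ∫ t in Set.Ioi u, phiD t ≤ ∫ t in Set.Ioi u, phiD t * (1 + 1 / t ^ 2) := by
    refine setIntegral_mono_on phiD_integrable.integrableOn hInt measurableSet_Ioi fun t _ => ?_
    have := phiD_pos t
    have h2 : 0 ≤ 1 / t ^ 2 := by positivity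
    nlinarith
  have hlo : ∫ t in Set.Ioi u, phiD t * (1 + 1 / t ^ 2) ≤ ∫ t in Set.Ioi u, phiD t * (1 + 1 / u ^ 2) := by
    refine setIntegral_mono_on hInt (phiD_integrable.mul_const _).integrableOn measurableSet_Ioi
      fun t ht => ?_
    have := phiD_pos t
    have ht' : u < t := ht
    gcongr
  rw [integral_mul_const] at hlo
  rw [hval] at hup hlo
  rw [hq]
  refine ⟨?_, by linarith⟩
  set Q := ∫ t in Set.Ioi u, phiD t with hQ
  set v := 1 / u ^ 2 with hv
  have hv0 : 0 < v := by positivity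
  have hφ : 0 < phiD u / u := div_pos (phiD_pos u) hu
  have hlo' : phiD u / u ≤ Q * (1 + v) := by linarith
  have hQ0 : 0 ≤ Q := setIntegral_nonneg measurableSet_Ioi fun t _ => (phiD_pos t).le
  rcases le_or_gt v 1 with h | h
  · calc phiD u / u * (1 - v) ≤ Q * (1 + v) * (1 - v) := by
          apply mul_le_mul_of_nonneg_right hlo'; linarith
      _ ≤ Q := by nlinarith [mul_nonneg hQ0 (sq_nonneg v)]
  · nlinarith

lemma klog (q : ℝ) (h0 : 0 < q) (h1 : q ≤ 1/2) :
    1 ≤ - Real.log (1 - q) / q ∧ - Real.log (1 - q) / q ≤ 1 + 2 * q := by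
  have hp : 0 < 1 - q := by linarith
  have a := Real.log_le_sub_one_of_pos hp
  have b := Real.one_sub_inv_le_log_of_pos hp
  constructor
  · rw [le_div_iff₀ h0]; linarith
  · rw [div_le_iff₀ h0]
    have : (1 - q)⁻¹ ≤ 1 + (1 + 2 * q) * q := by
      rw [inv_le_iff_one_le_mul₀ hp]
      nlinarith [mul_nonneg h0.le h0.le, mul_nonneg (mul_nonneg h0.le h0.le) (sub_nonneg.2 h1)]
    linarith

lemma prodbound (A s B M K η : ℝ) (h0 : 0 ≤ η) (h1 : η ≤ 1/100) (hs0 : 0 ≤ s) (hs1 : s ≤ 1)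
    (hA : |A - (1 - s)| ≤ η) (hB : |B - 1| ≤ 2 * η) (hM : |M - 1| ≤ η) (hK : |K - 1| ≤ 2 * η) :
    |A * B * M * K - (1 - s)| ≤ 20 * η := by
  have e1 : |A * (B - 1)| ≤ 4 * η := by
    have : |A| ≤ 2 := by
      rw [abs_le] at *; constructor <;> linarith
    rw [abs_mul]; nlinarith [abs_nonneg A, abs_nonneg (B-1)]
  have hAB : |A * B| ≤ 2 := by
    have : A * B = A * (B - 1) + (A - (1 - s)) + (1 - s) := by ring
    rw [this]
    rw [abs_le] at *; constructor <;> linarith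
  have e2 : |A * B * (M - 1)| ≤ 2 * η := by
    rw [abs_mul]; nlinarith [abs_nonneg (A*B), abs_nonneg (M-1)]
  have hABM : |A * B * M| ≤ 3 := by
    have : A * B * M = A * B * (M - 1) + A * B := by ring
    rw [this]
    rw [abs_le] at *; constructor <;> linarith
  have e3 : |A * B * M * (K - 1)| ≤ 6 * η := by
    rw [abs_mul]; nlinarith [abs_nonneg (A*B*M), abs_nonneg (K-1)]
  have : A * B * M * K - (1 - s) = A * B * M * (K - 1) + A * B * (M - 1) + A * (B - 1) + (A - (1 - s)) := by
    ring
  rw [this]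
  rw [abs_le] at *; constructor <;> linarith

lemma kappa_bounds : 0 ≤ Real.log (4 * Real.pi) ∧ Real.log (4 * Real.pi) ≤ 3 := by
  have := Real.pi_gt_three
  have h2 := Real.pi_lt_d2
  constructor
  · apply Real.log_nonneg; linarith
  · rw [Real.log_le_iff_le_exp (by positivity)]
    have h := Real.exp_one_gt_d9
    have : Real.exp 3 = Real.exp 1 ^ 3 := by rw [← Real.exp_nat_mul]; norm_num
    rw [this]
    have : (2.7:ℝ)^3 ≤ Real.exp 1 ^ 3 := by gcongr; linarith
    norm_num at this h2 ⊢
    linarith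

set_option maxHeartbeats 2000000 in
lemma core (n : ℕ) (L l : ℝ) (hL : L = Real.log n) (hl : l = Real.log L) (h3 : 3 ≤ l)
    (hl3 : 16 * l ^ 3 ≤ L) (hn : 8 * L ^ 2 ≤ n) (x : ℝ) (hx : |x| ≤ l) :
    ∃ r, Fmax n x = Real.exp (-(Real.exp (-x) * r)) ∧
      |r - 1 + l ^ 2 / (16 * L)| ≤ 30 * (l / L) * (1 + |x|) := by
  obtain ⟨hk0, hk3⟩ := kappa_bounds
  set κ := Real.log (4 * Real.pi) with hκ
  have hl0 : 0 < l := by linarith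
  have hl2 : 9 ≤ l ^ 2 := by nlinarith
  have hL432 : 432 ≤ L := by nlinarith
  have hL0 : 0 < L := by linarith
  have hn0 : (0:ℝ) < n := by nlinarith
  set a := aSeq n with ha
  have ha2 : a ^ 2 = 2 * L := by
    rw [ha, aSeq, Real.sq_sqrt (by rw [← hL]; linarith), hL]
  have ha0 : 0 < a := by
    rw [ha, aSeq]; apply Real.sqrt_pos.2; rw [← hL]; linarith
  set d := x - (l + κ) / 2 with hd
  set w := d / (2 * L) with hw
  set u := bSeq n + x / a with hu
  have hu' : u = a * (1 + w) := by
    have : u = a + d / a := by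
      rw [hu, bSeq, ← ha, ← hL, ← hl, hd]; field_simp; ring
    rw [this, hw, ← ha2]; field_simp
  obtain ⟨hx1, hx2⟩ := abs_le.1 hx
  have hdabs : |d| ≤ 2 * l := by rw [abs_le]; constructor <;> simp only [hd] <;> linarith
  set η := l / L with hη
  have hη0 : 0 < η := by positivity
  have hη1 : η ≤ 1/144 := by
    rw [hη, div_le_iff₀ hL0]; nlinarith
  have hwabs : |w| ≤ η := by
    rw [hw, abs_div, abs_of_pos (by positivity : (0:ℝ) < 2 * L), div_le_iff₀ (by positivity), hη]
    have : l / L * (2 * L) = 2 * l := by field_simp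
    linarith
  obtain ⟨hw1, hw2⟩ := abs_le.1 hwabs
  have h1w : 0 < 1 + w := by linarith
  have hu0 : 0 < u := by rw [hu']; positivity
  set s := d ^ 2 / (4 * L) with hs
  have hs0 : 0 ≤ s := by positivity
  have hsl : s ≤ l ^ 2 / L := by
    rw [hs, div_le_div_iff₀ (by positivity) hL0]
    have : d ^ 2 ≤ (2 * l) ^ 2 := by rw [← sq_abs]; gcongr
    nlinarith
  have hs1 : s ≤ 1 / 48 := by
    refine hsl.trans ?_
    rw [div_le_iff₀ hL0]; nlinarith
  have hs2 : s ^ 2 ≤ η := by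
    calc s ^ 2 ≤ (l ^ 2 / L) ^ 2 := by gcongr
      _ = η * (l ^ 3 / L) := by rw [hη]; field_simp
      _ ≤ η * 1 := by gcongr; rw [div_le_one hL0]; nlinarith [pow_pos hl0 3]
      _ = η := mul_one _

  set q := 1 - stdNormalCDF u with hq
  obtain ⟨hm1, hm2⟩ := mills u hu0
  rw [← hq] at hm1 hm2
  have hφ0 : 0 < phiD u / u := div_pos (phiD_pos u) hu0
  set M := q / (phiD u / u) with hM
  have hqM : q = phiD u / u * M := by rw [hM, mul_div_cancel₀ _ hφ0.ne']
  have hu2 : 1 / u ^ 2 ≤ η := by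
    rw [hu', mul_pow, ha2, hη, div_le_div_iff₀ (by positivity) hL0]
    have : 1/2 ≤ (1 + w) ^ 2 := by nlinarith only [hw1, hη1, sq_nonneg w]
    have h5 : L * (1/2) ≤ L * (1 + w) ^ 2 := by gcongr
    have h6 : 1 * L ≤ l * (2 * L * (1 + w) ^ 2) := by
      apply mul_le_mul <;> linarith
    exact h6
  have hM1 : M ≤ 1 := by rw [hM]; exact (div_le_one hφ0).2 hm2
  have hM2 : 1 - η ≤ M := by
    rw [hM, le_div_iff₀ hφ0]
    have : phiD u / u * (1 - η) ≤ phiD u / u * (1 - 1 / u ^ 2) := by gcongr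
    linarith
  set B := 1 / (1 + w) with hB
  have hBabs : |B - 1| ≤ 2 * η := by
    have : B - 1 = - w / (1 + w) := by rw [hB]; field_simp; ring
    rw [this, abs_div, abs_neg, abs_of_pos h1w, div_le_iff₀ h1w]
    nlinarith
  obtain ⟨hB1, hB2⟩ := abs_le.1 hBabs
  have hnq : n * (phiD u / u) = Real.exp (-x) * B * Real.exp (-s) := by
    have hexpL : Real.exp L = n := by rw [hL, Real.exp_log hn0]
    have hu2' : -u ^ 2 / 2 = -L - x + (l + κ) / 2 - s := by
      have e : u ^ 2 = 2 * L + 2 * d + d ^ 2 / (2 * L) := by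
        rw [hu', mul_pow, ha2, hw]; field_simp; ring
      rw [e, hs]
      have : d ^ 2 / (4 * L) = d ^ 2 / (2 * L) / 2 := by field_simp; try norm_num
      rw [this]; simp only [hd]; ring
    have hroot : Real.exp ((l + κ) / 2) = Real.sqrt (2 * Real.pi) * a := by
      have : l + κ = Real.log (2 * Real.pi * (2 * L)) := by
        rw [hl, hκ, ← Real.log_mul hL0.ne' (by positivity)]; congr 1; ring
      rw [Real.exp_half, this, Real.exp_log (by positivity), Real.sqrt_mul (by positivity), ha, aSeq, hL]
    have hphi : phiD u = (n:ℝ)⁻¹ * Real.exp (-x) * (Real.sqrt (2 * Real.pi) * a) * Real.exp (-s) / Real.sqrt (2 * Real.pi) := by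
      rw [phiD, hu2', ← hroot, ← hexpL, ← Real.exp_neg, ← Real.exp_add, ← Real.exp_add, ← Real.exp_add]
      congr 2
    have hsp : 0 < Real.sqrt (2 * Real.pi) := by positivity
    rw [hphi, hu', hB]
    field_simp
  have hexps0 : 1 - s ≤ Real.exp (-s) := by have := Real.add_one_le_exp (-s); linarith
  have hexps1 : Real.exp (-s) ≤ 1 := Real.exp_le_one_iff.2 (by linarith)
  have hexps2 : Real.exp (-s) ≤ 1 - s + s ^ 2 := by
    rw [Real.exp_neg, inv_le_iff_one_le_mul₀ (Real.exp_pos s)]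
    have h := Real.add_one_le_exp s
    have : (1 - s + s ^ 2) * (s + 1) ≤ (1 - s + s ^ 2) * Real.exp s := by
      apply mul_le_mul_of_nonneg_left h; nlinarith
    nlinarith only [pow_nonneg hs0 3, this]
  have hnqM : n * q = Real.exp (-x) * (Real.exp (-s) * B * M) := by
    rw [hqM, ← mul_assoc, hnq]; ring
  have hy : Real.exp (-x) ≤ L := by
    rw [← Real.exp_log hL0, ← hl]; apply Real.exp_le_exp.2; linarith
  have hB0 : 0 < B := by positivity
  have hM0 : 0 < M := by linarith
  have hq0 : 0 < q := by rw [hqM]; positivity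
  have hqη : q ≤ η := by
    have hP : Real.exp (-s) * B * M ≤ 1 * 2 * 1 := by
      gcongr; linarith
    have h1 : n * q ≤ L * (1 * 2 * 1) := by
      rw [hnqM]; gcongr
    have h2 : 8 * L ^ 2 * q ≤ n * q := by gcongr
    have h3' : L * q ≤ 1 := by nlinarith
    rw [hη, le_div_iff₀ hL0]; linarith
  obtain ⟨hK1, hK2⟩ := klog q hq0 (by linarith)
  set K := - Real.log (1 - q) / q with hK
  refine ⟨Real.exp (-s) * B * M * K, ?_, ?_⟩
  · have hF : Fmax n x = (1 - q) ^ n := by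
      rw [Fmax, ← ha, ← hu, hq]; congr 1; ring
    have h1q : 0 < 1 - q := by linarith
    rw [hF, ← Real.exp_log h1q, ← Real.exp_nat_mul]
    congr 1
    have : Real.log (1 - q) = - (q * K) := by rw [hK]; field_simp
    rw [this]
    have : Real.exp (-x) * (Real.exp (-s) * B * M * K) = (n * q) * K := by rw [hnqM]; ring
    rw [this]; ring
  · have hp := prodbound (Real.exp (-s)) s B M K η hη0.le (by linarith) hs0 (by linarith)
      (by rw [abs_le]; constructor <;> linarith) hBabs (by rw [abs_le]; constructor <;> linarith)
      (by rw [abs_le]; constructor <;> linarith)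
    have hsδ : |s - l ^ 2 / (16 * L)| ≤ 3 * η * (1 + |x|) := by
      have e : s - l ^ 2 / (16 * L) = (4 * x ^ 2 - 4 * x * (l + κ) + 2 * l * κ + κ ^ 2) / (16 * L) := by
        rw [hs, hd]; field_simp; ring
      have e2 : 3 * η * (1 + |x|) = (48 * l * (1 + |x|)) / (16 * L) := by
        rw [hη]; field_simp; ring
      rw [e, e2, abs_div, abs_of_pos (by positivity : (0:ℝ) < 16 * L)]
      gcongr
      have hx0 := abs_nonneg x
      have i1 : x ^ 2 ≤ l * |x| := by rw [← sq_abs]; nlinarith only [hx, hx0]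
      have i2 : |x * (l + κ)| ≤ 2 * l * |x| := by
        rw [abs_mul, abs_of_nonneg (by linarith : 0 ≤ l + κ)]; nlinarith only [hx0, hk3, h3]
      have i3 : l * κ ≤ 3 * l := by nlinarith only [hl0, hk3]
      have i4 : κ ^ 2 ≤ 3 * l := by nlinarith only [hk0, hk3, h3]
      have i5 : 0 ≤ l * κ := by positivity
      have i6 : 0 ≤ l * |x| := by positivity
      rw [abs_le] at i2 ⊢
      have i7 := sq_nonneg x
      have i8 := sq_nonneg κ
      obtain ⟨i9, i10⟩ := i2
      constructor <;> linarith only [i1, i3, i4, i5, i6, i7, i8, i9, i10, hl0]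
    have hx0 := abs_nonneg x
    have : 0 ≤ η * |x| := by positivity
    obtain ⟨p1, p2⟩ := abs_le.1 hp
    obtain ⟨p3, p4⟩ := abs_le.1 hsδ
    rw [abs_le]
    constructor <;> linarith only [p1, p2, p3, p4, this, hη0]

lemma ybound (x : ℝ) :
    Real.exp (-x) * (1 + |x|) * Real.exp (-(Real.exp (-x) / 2)) ≤ 8 := by
  set y := Real.exp (-x) with hy
  have hy0 : 0 < y := Real.exp_pos _
  have h1 : y * |x| ≤ 1 + y ^ 2 := by
    rcases le_total 0 x with h | h
    · rw [abs_of_nonneg h]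
      have h2 := Real.add_one_le_exp x
      have h3 : y * Real.exp x = 1 := by rw [hy, ← Real.exp_add]; simp
      nlinarith
    · rw [abs_of_nonpos h]
      have h2 := Real.add_one_le_exp (-x)
      rw [← hy] at h2
      nlinarith
  have h2 := Real.quadratic_le_exp_of_nonneg (by positivity : 0 ≤ y / 2)
  rw [Real.exp_neg, ← div_eq_mul_inv, div_le_iff₀ (Real.exp_pos _)]
  nlinarith

lemma expdiff (y r ρ : ℝ) (hy : 0 ≤ y) (h : |r - 1| ≤ ρ) :
    |Real.exp (-(y * r)) - Real.exp (-y)| ≤ y * |r - 1| * Real.exp (-(y * (1 - ρ))) := by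
  have hρ : 0 ≤ ρ := (abs_nonneg _).trans h
  obtain ⟨h1, h2⟩ := abs_le.1 h
  have key : ∀ A t : ℝ, 0 ≤ t → y * (1 - ρ) ≤ A →
      |Real.exp (-(A + t)) - Real.exp (-A)| ≤ t * Real.exp (-(y * (1 - ρ))) := by
    intro A t ht hA
    have e1 : Real.exp (-(A + t)) = Real.exp (-A) * Real.exp (-t) := by
      rw [← Real.exp_add]; congr 1; ring
    have e2 := Real.add_one_le_exp (-t)
    have e3 : Real.exp (-t) ≤ 1 := Real.exp_le_one_iff.2 (by linarith)
    have e4 : Real.exp (-A) ≤ Real.exp (-(y * (1 - ρ))) := Real.exp_le_exp.2 (by linarith)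
    have e5 := Real.exp_pos (-A)
    have e6 : Real.exp (-A) * t ≤ Real.exp (-(y * (1 - ρ))) * t := by gcongr
    rw [e1, abs_le]
    constructor <;> nlinarith
  rcases le_total 1 r with hr | hr
  · have := key y (y * (r - 1)) (mul_nonneg hy (by linarith)) (by nlinarith)
    rw [abs_of_nonneg (by linarith : 0 ≤ r - 1)]
    convert this using 5; ring
  · have := key (y * r) (y * (1 - r)) (mul_nonneg hy (by linarith)) (by nlinarith)
    rw [abs_of_nonpos (by linarith : r - 1 ≤ 0), abs_sub_comm]
    convert this using 4 <;> ring_nf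

lemma mul_exp_neg_le (z : ℝ) : z * Real.exp (-z) ≤ Real.exp (-1) := by
  have h := Real.add_one_le_exp (z - 1)
  have : Real.exp (-1) = Real.exp (z - 1) * Real.exp (-z) := by
    rw [← Real.exp_add]; congr 1; ring
  rw [this]
  have := Real.exp_pos (-z)
  nlinarith

lemma Fmax_nonneg (n : ℕ) (x : ℝ) : 0 ≤ Fmax n x := pow_nonneg (cdf_nonneg _) _

lemma Fmax_le_one (n : ℕ) (x : ℝ) : Fmax n x ≤ 1 := pow_le_one₀ (cdf_nonneg _) (cdf_le_one _)

lemma Fmax_mono (n : ℕ) : Monotone (Fmax n) := by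
  intro x y h
  refine pow_le_pow_left₀ (cdf_nonneg _) (cdf_mono ?_) n
  have : 0 ≤ aSeq n := Real.sqrt_nonneg _
  gcongr

lemma gumbel_mono : Monotone (fun x : ℝ => Real.exp (-Real.exp (-x))) := by
  intro x y h
  simp only
  gcongr

set_option maxHeartbeats 1000000 in
lemma upper (n : ℕ) (L l : ℝ) (hL : L = Real.log n) (hl : l = Real.log L) (h3 : 3 ≤ l)
    (hl3 : 16 * l ^ 3 ≤ L) (hn : 8 * L ^ 2 ≤ n) (hρ : 61 * (l ^ 2 / L) ≤ 1 / 2) (x : ℝ) :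
    |Fmax n x - Real.exp (-Real.exp (-x))| ≤
      l ^ 2 / (16 * L) * (Real.exp (-1) / (1 - 61 * (l ^ 2 / L))) + 240 * (l / L) + 2 / L := by
  have hl0 : 0 < l := by linarith
  have hl2 : 9 ≤ l ^ 2 := by nlinarith only [h3]
  have hL0 : 0 < L := by nlinarith only [hl3, hl2, h3]
  set ρ := 61 * (l ^ 2 / L) with hρd
  set η := l / L with hη
  have hη0 : 0 < η := by positivity
  have hδ0 : 0 < l ^ 2 / (16 * L) := by positivity
  have hρ0 : 0 < ρ := by positivity
  have hηl : η * l = l ^ 2 / L := by rw [hη]; ring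
  have hδ : l ^ 2 / (16 * L) = l ^ 2 / L / 16 := by field_simp
  have hrho : ∀ z r : ℝ, |z| ≤ l → |r - 1 + l ^ 2 / (16 * L)| ≤ 30 * η * (1 + |z|) → |r - 1| ≤ ρ := by
    intro z r hz hr
    have h1 : 30 * η * (1 + |z|) ≤ 60 * (l ^ 2 / L) := by
      rw [← hηl]
      have : η * (1 + |z|) ≤ η * (2 * l) := by gcongr; linarith
      linarith
    rw [abs_le] at hr ⊢
    constructor <;> linarith
  have main_nonneg : 0 ≤ l ^ 2 / (16 * L) * (Real.exp (-1) / (1 - ρ)) := by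
    apply mul_nonneg hδ0.le
    apply div_nonneg (Real.exp_pos _).le; linarith
  have hlabs : |l| ≤ l := (abs_of_pos hl0).le
  have hexpl : Real.exp l = L := by rw [hl, Real.exp_log hL0]
  rcases le_or_gt |x| l with hx | hx
  · obtain ⟨r, hF, hr⟩ := core n L l hL hl h3 hl3 hn x hx
    rw [hF]
    have hy0 := Real.exp_pos (-x)
    have hr1 := hrho x r hx hr
    have hd := expdiff (Real.exp (-x)) r ρ hy0.le hr1
    have hyb := ybound x
    set y := Real.exp (-x)
    have hr2 : |r - 1| ≤ l ^ 2 / (16 * L) + 30 * η * (1 + |x|) := by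
      rw [abs_le] at hr ⊢
      have : 0 ≤ 30 * η * (1 + |x|) := by positivity
      constructor <;> linarith
    have hE : Real.exp (-(y * (1 - ρ))) ≤ Real.exp (-(y / 2)) := by
      apply Real.exp_le_exp.2; nlinarith only [hρ, hy0]
    have hz := mul_exp_neg_le (y * (1 - ρ))
    have hz' : y * Real.exp (-(y * (1 - ρ))) ≤ Real.exp (-1) / (1 - ρ) := by
      rw [le_div_iff₀ (by linarith)]; linarith
    calc _ ≤ y * |r - 1| * Real.exp (-(y * (1 - ρ))) := hd
      _ ≤ y * (l ^ 2 / (16 * L) + 30 * η * (1 + |x|)) * Real.exp (-(y * (1 - ρ))) := by gcongr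
      _ = l ^ 2 / (16 * L) * (y * Real.exp (-(y * (1 - ρ)))) +
            30 * η * (y * (1 + |x|) * Real.exp (-(y * (1 - ρ)))) := by ring
      _ ≤ l ^ 2 / (16 * L) * (Real.exp (-1) / (1 - ρ)) +
            30 * η * (y * (1 + |x|) * Real.exp (-(y / 2))) := by gcongr
      _ ≤ l ^ 2 / (16 * L) * (Real.exp (-1) / (1 - ρ)) + 30 * η * 8 := by gcongr
      _ ≤ _ := by
        have : 0 ≤ 2 / L := by positivity
        linarith
  · suffices h : |Fmax n x - Real.exp (-Real.exp (-x))| ≤ 2 / L by linarith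
    rcases lt_abs.1 hx with h | h
    · obtain ⟨r, hF, hr⟩ := core n L l hL hl h3 hl3 hn l hlabs
      have hr1 := hrho l r hlabs hr
      have hm := Fmax_mono n h.le
      have hg := gumbel_mono h.le
      simp only at hg
      have hy : Real.exp (-l) = 1 / L := by rw [Real.exp_neg, hexpl, one_div]
      rw [hF, hy] at hm
      rw [hy] at hg
      have a1 := Real.add_one_le_exp (-(1 / L * r))
      have a2 := Real.add_one_le_exp (-(1 / L))
      have hr2 : r ≤ 2 := by linarith [(abs_le.1 hr1).2]
      have a3 : 1 / L * r ≤ 1 / L * 2 := by gcongr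
      have a4 : 1 / L * 2 = 2 / L := by ring
      have a5 : 1 / L ≤ 2 / L := by gcongr; norm_num
      have a6 := Fmax_le_one n x
      have a7 : Real.exp (-Real.exp (-x)) ≤ 1 :=
        Real.exp_le_one_iff.2 (by linarith [Real.exp_pos (-x)])
      rw [abs_le]; constructor <;> linarith
    · have hlabs' : |-l| ≤ l := by rw [abs_neg]; exact hlabs
      obtain ⟨r, hF, hr⟩ := core n L l hL hl h3 hl3 hn (-l) hlabs'
      have hr1 := hrho (-l) r hlabs' hr
      have h' : x ≤ -l := by linarith
      have hm := Fmax_mono n h'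
      have hg := gumbel_mono h'
      simp only at hg
      rw [hF, neg_neg, hexpl] at hm
      rw [neg_neg, hexpl] at hg
      have hr2 : 1/2 ≤ r := by linarith [(abs_le.1 hr1).1]
      have hE : Real.exp (-(L / 2)) ≤ 2 / L := by
        rw [Real.exp_neg, inv_le_comm₀ (Real.exp_pos _) (by positivity), inv_div]
        linarith [Real.add_one_le_exp (L / 2)]
      have a1 : Real.exp (-(L * r)) ≤ Real.exp (-(L / 2)) := by
        apply Real.exp_le_exp.2; nlinarith only [hr2, hL0]
      have a2 : Real.exp (-L) ≤ Real.exp (-(L / 2)) := by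
        apply Real.exp_le_exp.2; linarith
      have a3 := Fmax_nonneg n x
      have a4 := Real.exp_pos (-Real.exp (-x))
      rw [abs_le]; constructor <;> linarith

lemma lower (n : ℕ) (L l : ℝ) (hL : L = Real.log n) (hl : l = Real.log L) (h3 : 3 ≤ l)
    (hl3 : 16 * l ^ 3 ≤ L) (hn : 8 * L ^ 2 ≤ n) :
    Real.exp (-1) * (l ^ 2 / (16 * L) - 30 * (l / L)) ≤
      |Fmax n 0 - Real.exp (-Real.exp (-0))| := by
  obtain ⟨r, hF, hr⟩ := core n L l hL hl h3 hl3 hn 0 (by rw [abs_zero]; linarith)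
  rw [hF]
  simp only [neg_zero, Real.exp_zero, one_mul, abs_zero, add_zero, mul_one] at hr ⊢
  refine le_trans ?_ (le_abs_self _)
  have h1 : Real.exp (-r) = Real.exp (-1) * Real.exp (1 - r) := by
    rw [← Real.exp_add]; congr 1; ring
  have h2 := Real.add_one_le_exp (1 - r)
  have h4 := (abs_le.1 hr).2
  have h5 : Real.exp (-1) * (1 + (l ^ 2 / (16 * L) - 30 * (l / L))) ≤
      Real.exp (-1) * Real.exp (1 - r) := by gcongr; linarith
  rw [h1]; linarith

/-- Berry–Esseen type bound: the Kolmogorov distance between the law of the normalized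
maximum of `n` i.i.d. standard normals and the standard Gumbel distribution is
`(log log n)² / (16 e log n) · (1 + o(1))`. -/
theorem berryEsseen_gumbel_max_gaussian :
    Tendsto (fun n : ℕ =>
        (⨆ x : ℝ, |Fmax n x - Real.exp (-Real.exp (-x))|) /
          ((Real.log (Real.log n)) ^ 2 / (16 * Real.exp 1 * Real.log n)))
      atTop (nhds 1) := by
  have hcast : Tendsto (fun n : ℕ => (n : ℝ)) atTop atTop := tendsto_natCast_atTop_atTop
  have hLt : Tendsto (fun n : ℕ => Real.log n) atTop atTop := Real.tendsto_log_atTop.comp hcast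
  have hlt : Tendsto (fun n : ℕ => Real.log (Real.log n)) atTop atTop :=
    Real.tendsto_log_atTop.comp hLt
  have hpow : ∀ k : ℕ, Tendsto (fun x : ℝ => Real.log x ^ k / x) atTop (nhds 0) := by
    intro k
    have := (isLittleO_pow_log_id_atTop (n := k)).tendsto_div_nhds_zero
    simpa using this
  have t3 := (hpow 3).comp hLt
  have t2 := (hpow 2).comp hLt
  have tn := (hpow 2).comp hcast
  have tinv : Tendsto (fun n : ℕ => (Real.log (Real.log n))⁻¹) atTop (nhds 0) :=
    tendsto_inv_atTop_zero.comp hlt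
  have tlow : Tendsto (fun n : ℕ => 1 - 480 * (Real.log (Real.log n))⁻¹) atTop (nhds 1) := by
    simpa using (tinv.const_mul 480).const_sub 1
  have tup : Tendsto (fun n : ℕ => (1 - 61 * (Real.log (Real.log n) ^ 2 / Real.log n))⁻¹ +
      16 * Real.exp 1 * (240 * (Real.log (Real.log n))⁻¹ + 2 * (Real.log (Real.log n))⁻¹ ^ 2))
      atTop (nhds 1) := by
    have h1 : Tendsto (fun n : ℕ => (1 - 61 * (Real.log (Real.log n) ^ 2 / Real.log n))⁻¹)
        atTop (nhds 1) := by
      have := ((t2.const_mul 61).const_sub 1).inv₀ (by norm_num)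
      simpa using this
    have h2 := (((tinv.const_mul 240).add ((tinv.pow 2).const_mul 2)).const_mul (16 * Real.exp 1))
    have := h1.add h2
    simpa using this
  have hev : ∀ᶠ n : ℕ in atTop, 3 ≤ Real.log (Real.log n) ∧
      16 * Real.log (Real.log n) ^ 3 ≤ Real.log n ∧ 8 * Real.log n ^ 2 ≤ n ∧
      61 * (Real.log (Real.log n) ^ 2 / Real.log n) ≤ 1 / 2 := by
    filter_upwards [hlt.eventually_ge_atTop 3, hLt.eventually_gt_atTop 0,
      hcast.eventually_gt_atTop 0, t3.eventually (Iic_mem_nhds (by norm_num : (0:ℝ) < 1/16)),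
      t2.eventually (Iic_mem_nhds (by norm_num : (0:ℝ) < 1/122)),
      tn.eventually (Iic_mem_nhds (by norm_num : (0:ℝ) < 1/8))] with n h1 h2 h3 h4 h5 h6
    simp only [Function.comp] at h4 h5 h6
    rw [div_le_iff₀ h2] at h4
    rw [div_le_iff₀ h3] at h6
    exact ⟨h1, by linarith, by linarith, by linarith⟩
  have hee : Real.exp (-1) = (Real.exp 1)⁻¹ := Real.exp_neg 1
  refine tendsto_of_tendsto_of_tendsto_of_le_of_le' tlow tup ?_ ?_
  · filter_upwards [hev] with n hn
    obtain ⟨h1, h2, h3, h4⟩ := hn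
    have hlo := lower n _ _ rfl rfl h1 h2 h3
    have hbdd : BddAbove (Set.range fun x : ℝ => |Fmax n x - Real.exp (-Real.exp (-x))|) :=
      ⟨_, by rintro _ ⟨x, rfl⟩; exact upper n _ _ rfl rfl h1 h2 h3 h4 x⟩
    have hs := hlo.trans (le_ciSup hbdd 0)
    set l := Real.log (Real.log n)
    set L := Real.log (n : ℝ)
    have hl0 : 0 < l := by linarith
    have hL0 : 0 < L := by nlinarith [pow_pos hl0 3]
    rw [le_div_iff₀ (by positivity)]
    refine le_trans (le_of_eq ?_) hs
    rw [hee]; field_simp; ring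
  · filter_upwards [hev] with n hn
    obtain ⟨h1, h2, h3, h4⟩ := hn
    have hs := ciSup_le (upper n _ _ rfl rfl h1 h2 h3 h4)
    set l := Real.log (Real.log n)
    set L := Real.log (n : ℝ)
    have hl0 : 0 < l := by linarith
    have hL0 : 0 < L := by nlinarith [pow_pos hl0 3]
    rw [div_le_iff₀ (by positivity)]
    refine hs.trans (le_of_eq ?_)
    have hρ : (1 - 61 * (l ^ 2 / L)) ≠ 0 := by linarith
    rw [hee]
    set ρ := 61 * (l ^ 2 / L)
    field_simp
    ring
end

section
/- Let (X_i)_{i≥1} be i.i.d. standard normal, X_{(n)} = max_{1≤i≤n} X_i, and Y_n = a_n(X_{(n)} - b_n) with a_n = √(2 log n) and b_n = √(2 log n) - (log log n + log(4π))/(2√(2 log n)). Then the total variation distance between the law of Y_n and the standard Gumbel distribution Λ satisfies ‖L(Y_n) - Λ‖_TV = ((log log n)²/(8 e log n))(1 + o(1)) as n → ∞. -/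
open MeasureTheory Filter Real

/-- The standard normal density. -/
noncomputable def stdNormalPDF (x : ℝ) : ℝ :=
  Real.exp (-x ^ 2 / 2) / Real.sqrt (2 * Real.pi)

/-- `c_n = log (√(4 π log n))`. -/
noncomputable def cSeq (n : ℕ) : ℝ := Real.log (Real.sqrt (4 * Real.pi * Real.log n))

/-- The density of `Y_n = a_n (X_{(n)} - b_n)`:
`f_n(x) = n a_n⁻¹ φ(b_n + x/a_n) Φ(b_n + x/a_n)^{n-1}`. -/
noncomputable def fmax (n : ℕ) (x : ℝ) : ℝ :=
  n * (aSeq n)⁻¹ * stdNormalPDF (bSeq n + x / aSeq n) *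
    stdNormalCDF (bSeq n + x / aSeq n) ^ (n - 1)

/-- The density of the standard Gumbel distribution. -/
noncomputable def gumbelPDF (x : ℝ) : ℝ := Real.exp (-x - Real.exp (-x))


lemma phi_pos (x : ℝ) : 0 < stdNormalPDF x := by
  unfold stdNormalPDF; positivity

lemma phi_cont : Continuous stdNormalPDF := by
  unfold stdNormalPDF; fun_prop

lemma phi_int : Integrable stdNormalPDF := by
  have h := (integrable_exp_neg_mul_sq (b := 1/2) (by norm_num)).div_const (Real.sqrt (2*Real.pi))
  refine h.congr (Eventually.of_forall fun x => ?_)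
  simp only [stdNormalPDF]; congr 2; ring

lemma phi_integral : ∫ x, stdNormalPDF x = 1 := by
  have h := integral_gaussian (1/2)
  have h2 : ∀ x, stdNormalPDF x = Real.exp (-(1/2) * x^2) / Real.sqrt (2*Real.pi) := by
    intro x; simp only [stdNormalPDF]; congr 2; ring
  simp_rw [h2]
  rw [integral_div, h]
  have : Real.pi / (1/2) = 2 * Real.pi := by ring
  rw [this]
  exact div_self (by positivity)

lemma Phi_eq (x : ℝ) : stdNormalCDF x = ∫ t in Set.Iic x, stdNormalPDF t := rfl

lemma Phi_deriv (x : ℝ) : HasDerivAt stdNormalCDF (stdNormalPDF x) x := by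
  have h : stdNormalCDF = fun y => (∫ t in Set.Iic (0:ℝ), stdNormalPDF t) + ∫ t in (0:ℝ)..y, stdNormalPDF t := by
    funext y
    rw [Phi_eq, ← intervalIntegral.integral_Iic_sub_Iic phi_int.integrableOn phi_int.integrableOn]
    ring
  rw [h]
  exact (intervalIntegral.integral_hasDerivAt_right (phi_cont.intervalIntegrable _ _)
    phi_cont.aestronglyMeasurable.stronglyMeasurableAtFilter phi_cont.continuousAt).const_add _

lemma Phi_compl (x : ℝ) : 1 - stdNormalCDF x = ∫ t in Set.Ioi x, stdNormalPDF t := by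
  rw [← phi_integral, Phi_eq, ← intervalIntegral.integral_Iic_add_Ioi (b := x) phi_int.integrableOn phi_int.integrableOn]
  ring

lemma Phi_nonneg (x : ℝ) : 0 ≤ stdNormalCDF x := by
  rw [Phi_eq]; exact setIntegral_nonneg measurableSet_Iic (fun t _ => (phi_pos t).le)

lemma q_nonneg (x : ℝ) : 0 ≤ 1 - stdNormalCDF x := by
  rw [Phi_compl]; exact setIntegral_nonneg measurableSet_Ioi (fun t _ => (phi_pos t).le)

lemma Phi_top : Tendsto stdNormalCDF atTop (nhds 1) := by
  have := tendsto_setIntegral_of_monotone (μ := volume) (f := stdNormalPDF) (s := fun x : ℝ => Set.Iic x)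
    (fun _ => measurableSet_Iic) (fun a b h => Set.Iic_subset_Iic.2 h) (phi_int.integrableOn)
  have h2 : (⋃ x : ℝ, Set.Iic x) = Set.univ := Set.iUnion_Iic
  rw [h2] at this
  rw [Measure.restrict_univ, phi_integral] at this
  exact this

lemma phi_even (x : ℝ) : stdNormalPDF (-x) = stdNormalPDF x := by simp [stdNormalPDF]

lemma Phi_bot : Tendsto stdNormalCDF atBot (nhds 0) := by
  have h : ∀ x, stdNormalCDF x = 1 - stdNormalCDF (-x) := by
    intro x
    rw [Phi_compl, Phi_eq, ← integral_comp_neg_Iic]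
    simp [phi_even]
  have h2 : Tendsto (fun x => 1 - stdNormalCDF (-x)) atBot (nhds (1 - 1)) :=
    (Phi_top.comp tendsto_neg_atBot_atTop).const_sub 1
  simp only [sub_self] at h2
  exact h2.congr (fun x => (h x).symm)

lemma phi_deriv (x : ℝ) : HasDerivAt stdNormalPDF (-x * stdNormalPDF x) x := by
  unfold stdNormalPDF
  have h : HasDerivAt (fun x : ℝ => -x^2/2) (-x) x := by
    have := ((hasDerivAt_pow 2 x).neg).div_const 2
    refine this.congr_deriv ?_
    simp; ring
  refine ((h.exp).div_const _).congr_deriv ?_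
  ring

lemma phi_top : Tendsto stdNormalPDF atTop (nhds 0) := by
  unfold stdNormalPDF
  have h : Tendsto (fun x : ℝ => -x^2/2) atTop atBot := by
    have : Tendsto (fun x : ℝ => x^2/2) atTop atTop :=
      (tendsto_pow_atTop (by norm_num)).atTop_div_const (by norm_num)
    refine (tendsto_neg_atTop_atBot.comp this).congr (fun x => ?_)
    simp; ring
  have := (Real.tendsto_exp_atBot.comp h).div_const (Real.sqrt (2*Real.pi))
  simpa using this

/-- Monotone function argument: Mills upper. -/
lemma mills_upper {u : ℝ} (hu : 0 < u) : u * (1 - stdNormalCDF u) ≤ stdNormalPDF u := by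
  have hint : ∀ x ∈ Set.Ioi u, HasDerivAt (fun x => -stdNormalPDF x) (x * stdNormalPDF x) x := by
    intro x _
    exact (phi_deriv x).neg.congr_deriv (by ring)
  have hpos : ∀ x ∈ Set.Ioi u, 0 ≤ x * stdNormalPDF x := fun x hx =>
    mul_nonneg (hu.le.trans (le_of_lt hx)) (phi_pos x).le
  have ht : Tendsto (fun x => -stdNormalPDF x) atTop (nhds 0) := by simpa using phi_top.neg
  have hI := integrableOn_Ioi_deriv_of_nonneg (phi_cont.neg.continuousWithinAt) hint hpos ht
  have hE := integral_Ioi_of_hasDerivAt_of_nonneg (phi_cont.neg.continuousWithinAt) hint hpos ht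
  rw [Phi_compl, ← integral_const_mul]
  have : ∫ x in Set.Ioi u, x * stdNormalPDF x = stdNormalPDF u := by rw [hE]; simp
  rw [← this]
  refine setIntegral_mono_on (phi_int.integrableOn.const_mul _) hI measurableSet_Ioi ?_
  intro x hx
  exact mul_le_mul_of_nonneg_right (le_of_lt hx) (phi_pos x).le

lemma mills_lower {u : ℝ} (hu : 0 < u) :
    stdNormalPDF u / u ≤ (1 + 1/u^2) * (1 - stdNormalCDF u) := by
  have hd : ∀ x ∈ Set.Ici u, HasDerivAt (fun x => -(stdNormalPDF x / x)) ((1+1/x^2) * stdNormalPDF x) x := by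
    intro x hx
    have hx0 : x ≠ 0 := (lt_of_lt_of_le hu hx).ne'
    refine ((phi_deriv x).div (hasDerivAt_id x) hx0).neg.congr_deriv ?_
    simp only [id]
    field_simp
    ring
  have hpos : ∀ x ∈ Set.Ioi u, 0 ≤ (1+1/x^2) * stdNormalPDF x := fun x hx =>
    mul_nonneg (by positivity) (phi_pos x).le
  have ht : Tendsto (fun x => -(stdNormalPDF x / x)) atTop (nhds 0) := by
    have := (phi_top.div_atTop tendsto_id).neg
    simpa using this
  have hI := integrableOn_Ioi_deriv_of_nonneg' hd hpos ht
  have hE := integral_Ioi_of_hasDerivAt_of_nonneg' hd hpos ht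
  have : ∫ x in Set.Ioi u, (1+1/x^2) * stdNormalPDF x = stdNormalPDF u / u := by rw [hE]; ring
  rw [Phi_compl, ← integral_const_mul, ← this]
  refine setIntegral_mono_on hI (phi_int.integrableOn.const_mul _) measurableSet_Ioi ?_
  intro x hx
  have hx' : u < x := hx
  refine mul_le_mul_of_nonneg_right ?_ (phi_pos x).le
  gcongr

lemma g_pos (x : ℝ) : 0 < gumbelPDF x := Real.exp_pos _

lemma g_cont : Continuous gumbelPDF := by unfold gumbelPDF; fun_prop

lemma G_deriv (x : ℝ) : HasDerivAt (fun x => Real.exp (-Real.exp (-x))) (gumbelPDF x) x := by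
  have h1 : HasDerivAt (fun x : ℝ => -x) (-1) x := (hasDerivAt_id x).neg
  refine (h1.exp.neg).exp.congr_deriv ?_
  simp only [gumbelPDF, Pi.neg_apply, sub_eq_add_neg, Real.exp_add]; ring

lemma g_deriv (x : ℝ) : HasDerivAt gumbelPDF (gumbelPDF x * (Real.exp (-x) - 1)) x := by
  have h1 : HasDerivAt (fun x : ℝ => -x) (-1) x := (hasDerivAt_id x).neg
  unfold gumbelPDF
  refine (h1.sub h1.exp).exp.congr_deriv ?_
  simp only [Pi.sub_apply]
  ring

lemma expneg_top : Tendsto (fun x : ℝ => Real.exp (-x)) atTop (nhds 0) := Real.tendsto_exp_neg_atTop_nhds_zero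

lemma G_top : Tendsto (fun x : ℝ => Real.exp (-Real.exp (-x))) atTop (nhds 1) := by
  have := (Real.continuous_exp.tendsto _).comp expneg_top.neg
  rw [neg_zero, Real.exp_zero] at this
  exact this

lemma G_bot : Tendsto (fun x : ℝ => Real.exp (-Real.exp (-x))) atBot (nhds 0) := by
  exact expneg_top.comp (Real.tendsto_exp_atTop.comp tendsto_neg_atBot_atTop)

lemma g_top : Tendsto gumbelPDF atTop (nhds 0) := by
  have := expneg_top.mul G_top
  simp only [zero_mul] at this
  refine this.congr fun x => ?_
  simp [gumbelPDF, sub_eq_add_neg, Real.exp_add]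

lemma expnegabs_int : Integrable (fun x : ℝ => Real.exp (-|x|/2)) := by
  rw [← integrableOn_univ, ← Set.Iic_union_Ioi (a := (0:ℝ))]
  refine IntegrableOn.union ?_ ?_
  · have h := integrableOn_exp_mul_Iic (a := 1/2) (by norm_num) 0
    refine h.congr_fun (fun x hx => ?_) measurableSet_Iic
    simp only [abs_of_nonpos (Set.mem_Iic.1 hx)]; congr 1; ring
  · have h := integrableOn_exp_mul_Ioi (a := -1/2) (by norm_num) 0
    refine h.congr_fun (fun x hx => ?_) measurableSet_Ioi
    simp only [abs_of_pos (Set.mem_Ioi.1 hx)]; congr 1; ring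

lemma dom_int : Integrable (fun x : ℝ => gumbelPDF x * ((1 + x^2) * (1 + Real.exp (-x)^2))) := by
  refine (expnegabs_int.const_mul 400).mono' (by have := g_cont; fun_prop) (Eventually.of_forall fun x => ?_)
  rw [Real.norm_of_nonneg (mul_nonneg (g_pos x).le (by positivity))]
  have hp : 1 + x^2 ≤ 8 * Real.exp (|x|/2) := by
    have := Real.quadratic_le_exp_of_nonneg (x := |x|/2) (by positivity)
    have h2 : |x|^2 = x^2 := sq_abs x
    nlinarith [abs_nonneg x]
  have hg : gumbelPDF x = Real.exp (-x) * Real.exp (-Real.exp (-x)) := by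
    simp [gumbelPDF, sub_eq_add_neg, Real.exp_add]
  rcases le_total 0 x with hx | hx
  · have e1 : Real.exp (-x) ≤ 1 := by simpa using hx
    have e2 : Real.exp (-Real.exp (-x)) ≤ 1 := by simpa using (Real.exp_pos _).le
    have e3 : 1 + Real.exp (-x)^2 ≤ 2 := by nlinarith [Real.exp_pos (-x)]
    rw [abs_of_nonneg hx] at *
    have e4 : Real.exp (-x) * Real.exp (x/2) = Real.exp (-x/2) := by
      rw [← Real.exp_add]; congr 1; ring
    calc gumbelPDF x * ((1 + x^2) * (1 + Real.exp (-x)^2))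
        ≤ (Real.exp (-x) * 1) * ((8 * Real.exp (x/2)) * 2) := by
          rw [hg]; gcongr
      _ = 16 * Real.exp (-x/2) := by rw [← e4]; ring
      _ ≤ _ := by nlinarith [Real.exp_pos (-x/2)]
  · have e0 : 1 ≤ Real.exp (-x) := by simpa using hx
    rw [abs_of_nonpos hx] at *
    set y := Real.exp (-x) with hy
    have e1 : y^4 / 24 ≤ Real.exp y := by
      have := Real.pow_div_factorial_le_exp y (by positivity) 4
      simpa [Nat.factorial] using this
    have e2 : Real.exp (-y) ≤ 24 / y^4 := by
      rw [Real.exp_neg, inv_le_comm₀ (Real.exp_pos _) (by positivity)]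
      simpa using e1
    have e4 : Real.exp (-x/2) = y * Real.exp (x/2) := by
      rw [hy, ← Real.exp_add]; congr 1; ring
    rw [neg_neg]
    calc gumbelPDF x * ((1 + x^2) * (1 + y^2))
        ≤ (y * (24 / y^4)) * ((8 * Real.exp (-x/2)) * (2 * y^2)) := by
          rw [hg]; gcongr; nlinarith
      _ = 384 * Real.exp (x/2) := by rw [e4]; field_simp; ring
      _ ≤ _ := by nlinarith [Real.exp_pos (x/2)]

lemma cdf_int {F f : ℝ → ℝ} (hd : ∀ x, HasDerivAt F (f x) x) (hc : Continuous f)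
    (hpos : ∀ x, 0 ≤ f x) (h1 : Tendsto F atTop (nhds 1)) (h0 : Tendsto F atBot (nhds 0)) :
    Integrable f ∧ ∫ x, f x = 1 := by
  have hI : Integrable f := by
    refine integrable_of_intervalIntegral_norm_tendsto (ι := ℝ) (l := atTop) (a := fun i => -i) (b := fun i => i)
      (1 - 0) (fun i => (hc.integrableOn_Icc).mono_set Set.Ioc_subset_Icc_self)
      tendsto_neg_atTop_atBot tendsto_id ?_
    refine (h1.sub (h0.comp tendsto_neg_atTop_atBot)).congr fun i => ?_
    have : ∀ x, ‖f x‖ = f x := fun x => Real.norm_of_nonneg (hpos x)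
    simp_rw [this]
    rw [intervalIntegral.integral_eq_sub_of_hasDerivAt (fun x _ => hd x) (hc.intervalIntegrable _ _)]
    rfl
  refine ⟨hI, ?_⟩
  rw [integral_of_hasDerivAt_of_tendsto hd hI h0 h1]; simp

lemma g_int : Integrable gumbelPDF ∧ ∫ x, gumbelPDF x = 1 :=
  cdf_int G_deriv g_cont (fun x => (g_pos x).le) G_top G_bot

lemma fmax_int {n : ℕ} (hn : 2 ≤ n) : Integrable (fmax n) ∧ ∫ x, fmax n x = 1 := by
  have hL : 0 < Real.log n := Real.log_pos (by exact_mod_cast hn)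
  have ha : 0 < aSeq n := Real.sqrt_pos.2 (by positivity)
  have hlin : ∀ x, HasDerivAt (fun x => bSeq n + x / aSeq n) ((aSeq n)⁻¹) x := fun x => by
    refine (((hasDerivAt_id x).div_const (aSeq n)).const_add _).congr_deriv ?_
    simp
  have hPc : Continuous stdNormalCDF := continuous_iff_continuousAt.2 fun x => (Phi_deriv x).continuousAt
  refine cdf_int (F := Fmax n) (fun x => ?_) ?_ (fun x => ?_) ?_ ?_
  · have := ((Phi_deriv (bSeq n + x / aSeq n)).comp x (hlin x)).pow n
    refine this.congr_deriv ?_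
    simp only [fmax, Function.comp]; ring
  · unfold fmax
    have := phi_cont
    fun_prop
  · unfold fmax
    have := Phi_nonneg (bSeq n + x / aSeq n)
    have := phi_pos (bSeq n + x / aSeq n)
    positivity
  · have : Tendsto (fun x => bSeq n + x / aSeq n) atTop atTop :=
      tendsto_atTop_add_const_left _ _ (tendsto_id.atTop_div_const ha)
    have h2 := (Phi_top.comp this).pow n
    rw [one_pow] at h2
    exact h2
  · have : Tendsto (fun x => bSeq n + x / aSeq n) atBot atBot :=
      tendsto_atBot_add_const_left _ _ (tendsto_id.atBot_div_const ha)
    have h2 := (Phi_bot.comp this).pow n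
    rw [zero_pow (by omega)] at h2
    exact h2

lemma lim_integral : ∫ x, max (gumbelPDF x * (1 - Real.exp (-x))) 0 = Real.exp (-1) := by
  have hz : ∀ x, x ∉ Set.Ioi (0:ℝ) → max (gumbelPDF x * (1 - Real.exp (-x))) 0 = 0 := by
    intro x hx
    have hx : x ≤ 0 := by simpa using hx
    have e0 : 1 ≤ Real.exp (-x) := by simpa using hx
    exact max_eq_right (mul_nonpos_of_nonneg_of_nonpos (g_pos x).le (by linarith))
  rw [← setIntegral_eq_integral_of_forall_compl_eq_zero hz]
  have hpos : ∀ x ∈ Set.Ioi (0:ℝ), 0 ≤ gumbelPDF x * (1 - Real.exp (-x)) := by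
    intro x hx
    have e0 : Real.exp (-x) ≤ 1 := by simpa using (le_of_lt hx)
    exact mul_nonneg (g_pos x).le (by linarith)
  rw [setIntegral_congr_fun measurableSet_Ioi (fun x hx => max_eq_left (hpos x hx))]
  have hd : ∀ x ∈ Set.Ici (0:ℝ), HasDerivAt (fun x => -gumbelPDF x) (gumbelPDF x * (1 - Real.exp (-x))) x :=
    fun x _ => (g_deriv x).neg.congr_deriv (by ring)
  rw [integral_Ioi_of_hasDerivAt_of_nonneg' hd hpos (by simpa using g_top.neg)]
  simp [gumbelPDF]

noncomputable def cc (n : ℕ) : ℝ := (Real.log (Real.log n) + Real.log (4 * Real.pi)) / 2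
noncomputable def dd (n : ℕ) : ℝ := cc n ^ 2 / (4 * Real.log n)
noncomputable def ss (n : ℕ) (x : ℝ) : ℝ := (x - cc n) ^ 2 / (4 * Real.log n)
noncomputable def ww (n : ℕ) (x : ℝ) : ℝ := (x - cc n) / (2 * Real.log n)
noncomputable def uu (n : ℕ) (x : ℝ) : ℝ := bSeq n + x / aSeq n
noncomputable def qq (n : ℕ) (x : ℝ) : ℝ := 1 - stdNormalCDF (uu n x)
noncomputable def EE (n : ℕ) (x : ℝ) : ℝ :=
  -ss n x + Real.exp (-x) + ((n:ℝ) - 1) * Real.log (1 - qq n x)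

lemma L_pos {n : ℕ} (hn : 2 ≤ n) : 0 < Real.log n := Real.log_pos (by exact_mod_cast hn)
lemma a_pos {n : ℕ} (hn : 2 ≤ n) : 0 < aSeq n := Real.sqrt_pos.2 (by have := L_pos hn; positivity)
lemma a_sq {n : ℕ} (hn : 2 ≤ n) : aSeq n ^ 2 = 2 * Real.log n :=
  Real.sq_sqrt (by have := L_pos hn; positivity)

lemma u_eq {n : ℕ} (hn : 2 ≤ n) (x : ℝ) : uu n x = aSeq n * (1 + ww n x) := by
  have ha := a_pos hn
  have hL := L_pos hn
  have h : ww n x = (x - cc n) / aSeq n ^ 2 := by rw [a_sq hn]; rfl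
  rw [h, uu, bSeq, cc]
  field_simp
  ring

lemma dens {n : ℕ} (hn : 2 ≤ n) (x : ℝ) :
    n * (aSeq n)⁻¹ * stdNormalPDF (uu n x) = Real.exp (-x) * Real.exp (-ss n x) := by
  have ha := a_pos hn
  have hL := L_pos hn
  have hu : -(uu n x) ^ 2 / 2 = -Real.log n + cc n + (-x) + (-ss n x) := by
    rw [u_eq hn, mul_pow, a_sq hn, ww, ss]
    field_simp
    ring
  have hc : Real.exp (cc n) = aSeq n * Real.sqrt (2 * Real.pi) := by
    have h1 : cc n = Real.log (4 * Real.pi * Real.log n) / 2 := by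
      rw [cc, Real.log_mul (by positivity) hL.ne']; ring
    rw [h1, Real.exp_half, Real.exp_log (by positivity), aSeq, ← Real.sqrt_mul (by positivity)]
    congr 1; ring
  have hn0 : (n:ℝ) ≠ 0 := by positivity
  have hs : Real.sqrt (2 * Real.pi) ≠ 0 := by positivity
  rw [stdNormalPDF, hu, Real.exp_add, Real.exp_add, Real.exp_add, hc, Real.exp_neg, Real.exp_log (by positivity)]
  field_simp

lemma ss_nonneg {n : ℕ} (hn : 2 ≤ n) (x : ℝ) : 0 ≤ ss n x := by
  have := L_pos hn; unfold ss; positivity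

lemma qq_nonneg (n : ℕ) (x : ℝ) : 0 ≤ qq n x := q_nonneg _

lemma fmax_eq {n : ℕ} (hn : 2 ≤ n) (x : ℝ) (hq : qq n x ≤ 1/2) :
    fmax n x = gumbelPDF x * Real.exp (EE n x) := by
  have h1 : stdNormalCDF (uu n x) = 1 - qq n x := by unfold qq; ring
  have hp : 0 < 1 - qq n x := by linarith
  have h2 : (1 - qq n x) ^ (n-1) = Real.exp (((n:ℝ) - 1) * Real.log (1 - qq n x)) := by
    have : ((n:ℝ) - 1) = ((n-1 : ℕ) : ℝ) := by rw [Nat.cast_sub (by omega)]; simp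
    rw [this, Real.exp_nat_mul, Real.exp_log hp]
  have h0 := dens hn x
  unfold fmax
  rw [show bSeq n + x / aSeq n = uu n x from rfl, h0, h1, h2, gumbelPDF, EE, ← Real.exp_add,
    ← Real.exp_add, ← Real.exp_add]
  congr 1; ring

lemma q_bounds {n : ℕ} (hn : 2 ≤ n) (hL2 : 2 ≤ Real.log n) {x : ℝ} (hw : |ww n x| ≤ 1/2) :
    n * qq n x ≤ Real.exp (-x) * Real.exp (-ss n x) * (1 + 2 * |ww n x|) ∧
    Real.exp (-x) * Real.exp (-ss n x) * ((1 - |ww n x|) * (1 - 2 / Real.log n)) ≤ n * qq n x := by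
  have ha := a_pos hn
  have hL := L_pos hn
  have hd := dens hn x
  have hu := u_eq hn x
  have hq := qq_nonneg n x
  set A := Real.exp (-x) * Real.exp (-ss n x) with hA
  have hA0 : 0 < A := by positivity
  set w := ww n x
  have hn0 : (0:ℝ) < n := by positivity
  obtain ⟨hw1, hw2⟩ := abs_le.1 hw
  have h1w : 1/2 ≤ 1 + w := by linarith
  have hu0 : 0 < uu n x := by rw [hu]; exact mul_pos ha (by linarith)
  have hphi : n * stdNormalPDF (uu n x) = aSeq n * A := by
    rw [← hd]; field_simp
  have m1 : uu n x * qq n x ≤ stdNormalPDF (uu n x) := mills_upper hu0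
  have m2 : stdNormalPDF (uu n x) / uu n x ≤ (1 + 1/(uu n x)^2) * qq n x := mills_lower hu0
  have k1 : (1 + w) * (n * qq n x) ≤ A := by
    have : aSeq n * ((1 + w) * (n * qq n x)) ≤ aSeq n * A := by
      rw [← hphi]
      calc _ = n * (uu n x * qq n x) := by rw [hu]; ring
        _ ≤ _ := by gcongr
    exact le_of_mul_le_mul_left this ha
  have k2 : A ≤ (1 + w) * ((1 + 1/(uu n x)^2) * (n * qq n x)) := by
    rw [div_le_iff₀ hu0] at m2
    have : aSeq n * A ≤ aSeq n * ((1 + w) * ((1 + 1/(uu n x)^2) * (n * qq n x))) := by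
      rw [← hphi]
      calc n * stdNormalPDF (uu n x) ≤ n * ((1 + 1/(uu n x)^2) * qq n x * uu n x) := by gcongr
        _ = aSeq n * (1 + w) * ((1 + 1/(uu n x)^2) * (n * qq n x)) := by rw [← hu]; ring
        _ = _ := by ring
    exact le_of_mul_le_mul_left this ha
  have habs : 0 ≤ |w| := abs_nonneg w
  have hle : w ≤ |w| := le_abs_self w
  have hge : -|w| ≤ w := neg_abs_le w
  constructor
  · have : 1 ≤ (1 + 2*|w|) * (1 + w) := by nlinarith
    have hnq : 0 ≤ n * qq n x := by positivity
    calc n * qq n x ≤ ((1 + 2*|w|) * (1 + w)) * (n * qq n x) := by nlinarith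
      _ = (1 + 2*|w|) * ((1 + w) * (n * qq n x)) := by ring
      _ ≤ (1 + 2*|w|) * A := by gcongr
      _ = _ := by ring
  · have hnq : 0 ≤ n * qq n x := by positivity
    have hinv : 1/(uu n x)^2 ≤ 2 / Real.log n := by
      have : Real.log n / 2 ≤ (uu n x)^2 := by
        have h4 : 1/4 ≤ (1+w)^2 := by nlinarith
        rw [hu, mul_pow, a_sq hn]; nlinarith
      rw [div_le_div_iff₀ (by positivity) hL]; linarith
    have hi0 : 0 ≤ 1/(uu n x)^2 := by positivity
    set i := 1/(uu n x)^2
    have h2L : 2 / Real.log n ≤ 1 := by rw [div_le_one hL]; exact hL2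
    have p1 : (1 - |w|) * (1 + w) ≤ 1 := by nlinarith
    have p1' : 0 ≤ (1 - |w|) * (1 + w) := mul_nonneg (by linarith) (by linarith)
    have p2 : (1 - 2 / Real.log n) * (1 + i) ≤ 1 := by nlinarith
    have p2' : 0 ≤ (1 - 2 / Real.log n) * (1 + i) := mul_nonneg (by linarith) (by linarith)
    have p3 : 0 ≤ (1 - |w|) * (1 - 2 / Real.log n) := mul_nonneg (by linarith) (by linarith)
    calc A * ((1 - |w|) * (1 - 2 / Real.log n))
        ≤ ((1 + w) * ((1 + i) * (n * qq n x))) * ((1 - |w|) * (1 - 2 / Real.log n)) := by gcongr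
      _ = (((1 - |w|) * (1 + w)) * ((1 - 2 / Real.log n) * (1 + i))) * (n * qq n x) := by ring
      _ ≤ 1 * (n * qq n x) := by
          gcongr
          nlinarith
      _ = _ := one_mul _

lemma q_half {n : ℕ} (hn : 2 ≤ n) (hL2 : 2 ≤ Real.log n) {x : ℝ} (hw : |ww n x| ≤ 1/2)
    (hx : 4 * Real.exp (-x) ≤ n) : n * qq n x ≤ 2 * Real.exp (-x) ∧ qq n x ≤ 1/2 := by
  have h := (q_bounds hn hL2 hw).1
  have hn0 : (0:ℝ) < n := by positivity
  have hs : Real.exp (-ss n x) ≤ 1 := by simpa using ss_nonneg hn x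
  have h1 : n * qq n x ≤ 2 * Real.exp (-x) := by
    calc _ ≤ _ := h
      _ ≤ Real.exp (-x) * 1 * (1 + 2 * (1/2)) := by gcongr
      _ = _ := by ring
  refine ⟨h1, ?_⟩
  have : n * qq n x ≤ n * (1/2) := by linarith
  exact le_of_mul_le_mul_left this hn0

lemma E_bounds {n : ℕ} (hn : 2 ≤ n) (hL2 : 2 ≤ Real.log n) {x : ℝ} (hw : |ww n x| ≤ 1/2)
    (hx : 4 * Real.exp (-x) ≤ n) :
    -ss n x + Real.exp (-x) - Real.exp (-x) * Real.exp (-ss n x) * (1 + 2 * |ww n x|)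
      - 8 * Real.exp (-x) ^ 2 / n ≤ EE n x ∧
    EE n x ≤ -ss n x + Real.exp (-x)
      - Real.exp (-x) * Real.exp (-ss n x) * ((1 - |ww n x|) * (1 - 2 / Real.log n))
      + 2 * Real.exp (-x) / n := by
  obtain ⟨b1, b2⟩ := q_bounds hn hL2 hw
  obtain ⟨h1, h2⟩ := q_half hn hL2 hw hx
  have hn0 : (0:ℝ) < n := by positivity
  have hn1 : (1:ℝ) ≤ n := by exact_mod_cast (by omega : 1 ≤ n)
  have hq := qq_nonneg n x
  have hp : 0 < 1 - qq n x := by linarith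
  have hq' : qq n x ≤ 2 * Real.exp (-x) / n := by rw [le_div_iff₀ hn0]; linarith
  unfold EE
  set q := qq n x
  have l1 : Real.log (1 - q) ≤ -q := by linarith [Real.log_le_sub_one_of_pos hp]
  have l2 : -q - 2 * q^2 ≤ Real.log (1 - q) := by
    have := Real.one_sub_inv_le_log_of_pos hp
    have h3 : (1 - q)⁻¹ ≤ 1 + q + 2 * q^2 := by
      rw [inv_le_iff_one_le_mul₀ hp]; nlinarith [mul_nonneg hq hq]
    linarith
  constructor
  · have hl0 : Real.log (1 - q) ≤ 0 := by linarith
    have : n * q^2 ≤ 4 * Real.exp (-x)^2 / n := by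
      rw [le_div_iff₀ hn0]
      have := mul_self_le_mul_self (by positivity) h1
      nlinarith
    have e : 8 * Real.exp (-x)^2 / n = 2 * (4 * Real.exp (-x)^2 / n) := by ring
    rw [e]
    nlinarith
  · nlinarith

lemma logn_top : Tendsto (fun n : ℕ => Real.log n) atTop atTop :=
  Real.tendsto_log_atTop.comp tendsto_natCast_atTop_atTop

lemma cc_top : Tendsto cc atTop atTop := by
  unfold cc
  exact (tendsto_atTop_add_const_right _ _ (Real.tendsto_log_atTop.comp logn_top)).atTop_div_const
    (by norm_num)

lemma dd_zero : Tendsto dd atTop (nhds 0) := by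
  have h2 : Tendsto (fun y : ℝ => Real.log y ^ 2 / y) atTop (nhds 0) :=
    (Real.isLittleO_pow_log_id_atTop (n := 2)).tendsto_div_nhds_zero
  have h1 : Tendsto (fun y : ℝ => Real.log y / y) atTop (nhds 0) :=
    (Real.isLittleO_log_id_atTop).tendsto_div_nhds_zero
  have h0 : Tendsto (fun y : ℝ => y⁻¹) atTop (nhds 0) := tendsto_inv_atTop_zero
  set K := Real.log (4 * Real.pi) with hK
  have := ((h2.add (h1.const_mul (2*K))).add (h0.const_mul (K^2))).const_mul (1/16)
  simp only [mul_zero, add_zero] at this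
  refine (this.comp logn_top).congr' ?_
  filter_upwards [eventually_ge_atTop 2] with n hn
  have hL := L_pos hn
  simp only [Function.comp, dd, cc, ← hK]
  field_simp
  ring

def good (n : ℕ) : Prop := 2 ≤ n ∧ 4 ≤ Real.log n ∧ 1 ≤ cc n ∧ dd n ≤ 1/4

lemma ev_good : ∀ᶠ n in atTop, good n := by
  filter_upwards [eventually_ge_atTop 2, logn_top.eventually_ge_atTop 4, cc_top.eventually_ge_atTop 1,
    dd_zero.eventually_le_const (by norm_num : (0:ℝ) < 1/4)] with n h1 h2 h3 h4
  exact ⟨h1, h2, h3, h4⟩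

lemma dd_pos {n : ℕ} (h : good n) : 0 < dd n := by
  obtain ⟨h1, h2, h3, h4⟩ := h
  unfold dd
  positivity

lemma good_x {n : ℕ} (h : good n) {x : ℝ} (hx : |x| ≤ Real.sqrt (Real.log n)) :
    |ww n x| ≤ 1/2 ∧ 4 * Real.exp (-x) ≤ n := by
  obtain ⟨h1, h2, h3, h4⟩ := h
  have hL := L_pos h1
  have hc : cc n ≤ Real.log n / 2 := by
    unfold dd at h4
    rw [div_le_iff₀ (by positivity)] at h4
    nlinarith
  have hs : Real.sqrt (Real.log n) ≤ Real.log n / 2 := by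
    rw [Real.sqrt_le_left (by positivity)]; nlinarith
  obtain ⟨hx1, hx2⟩ := abs_le.1 hx
  constructor
  · unfold ww
    rw [abs_div, abs_of_pos (by positivity : 0 < 2 * Real.log n), div_le_iff₀ (by positivity), abs_le]
    constructor <;> linarith
  · have e2 : 4 ≤ Real.exp 2 := by
      have := Real.quadratic_le_exp_of_nonneg (x := 2) (by norm_num); linarith
    calc 4 * Real.exp (-x) ≤ Real.exp 2 * Real.exp (-x) := by gcongr
      _ = Real.exp (2 + -x) := (Real.exp_add _ _).symm
      _ ≤ Real.exp (Real.log n) := by gcongr; linarith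
      _ = n := Real.exp_log (by positivity)

lemma ev_x (x : ℝ) : ∀ᶠ n : ℕ in atTop, |x| ≤ Real.sqrt (Real.log n) :=
  (Real.tendsto_sqrt_atTop.comp logn_top).eventually_ge_atTop |x|

lemma fmax_nonneg (n : ℕ) (x : ℝ) : 0 ≤ fmax n x := by
  unfold fmax
  have := Phi_nonneg (bSeq n + x / aSeq n)
  have := phi_pos (bSeq n + x / aSeq n)
  have : 0 ≤ aSeq n := Real.sqrt_nonneg _
  positivity

lemma domination {n : ℕ} (h : good n) (x : ℝ) :
    max (gumbelPDF x - fmax n x) 0 / dd n ≤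
      100 * (gumbelPDF x * ((1 + x^2) * (1 + Real.exp (-x)^2))) := by
  have hd := dd_pos h
  have hg := g_pos x
  rw [div_le_iff₀ hd]
  have h' := h
  obtain ⟨h1, h2, h3, h4⟩ := h'
  have hL := L_pos h1
  set e := Real.exp (-x) with he
  have he0 : 0 < e := Real.exp_pos _
  refine max_le ?_ (by positivity)
  have hdef : dd n * (4 * Real.log n) = cc n ^ 2 := by unfold dd; field_simp
  have hdL : 1 ≤ dd n * (4 * Real.log n) := by rw [hdef]; nlinarith
  rcases le_or_gt |x| (Real.sqrt (Real.log n)) with hx | hx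
  · obtain ⟨hw, hx4⟩ := good_x h hx
    have hE := (E_bounds h1 (by linarith) hw hx4).1
    rw [fmax_eq h1 x (q_half h1 (by linarith) hw hx4).2]
    have hexp : EE n x + 1 ≤ Real.exp (EE n x) := Real.add_one_le_exp _
    have hs : Real.exp (-ss n x) ≤ 1 := by simpa using ss_nonneg h1 x
    rw [← he] at hE
    have hE2 : e * Real.exp (-ss n x) * (1 + 2 * |ww n x|) ≤ e * (1 + 2 * |ww n x|) := by
      gcongr; nlinarith
    have hn0 : (0:ℝ) < n := by positivity
    have habs : |x - cc n| ≤ (|x| + 1) * cc n := by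
      have h5 : |x - cc n| ≤ |x| + |cc n| := abs_sub _ _
      rw [abs_of_pos (by linarith : 0 < cc n)] at h5
      nlinarith [abs_nonneg x]
    have b1 : ss n x ≤ dd n * (|x|+1)^2 := by
      have : (x - cc n)^2 ≤ ((|x| + 1) * cc n)^2 := by
        rw [← sq_abs (x - cc n)]; gcongr
      unfold ss dd
      rw [div_mul_eq_mul_div]
      gcongr
      linarith
    have b2 : |ww n x| ≤ 2 * dd n * (|x|+1) := by
      unfold ww
      rw [abs_div, abs_of_pos (by positivity : 0 < 2 * Real.log n), div_le_iff₀ (by positivity)]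
      calc |x - cc n| ≤ (|x| + 1) * cc n := habs
        _ ≤ (|x| + 1) * cc n ^ 2 := by gcongr; nlinarith
        _ = _ := by rw [← hdef]; ring
    have b3 : e^2 / n ≤ 4 * dd n * e^2 := by
      rw [div_le_iff₀ hn0]
      have : Real.log n ≤ n := by linarith [Real.log_le_sub_one_of_pos hn0]
      have : 1 ≤ 4 * dd n * n := by nlinarith
      nlinarith [sq_nonneg e]
    have b4 : e * |ww n x| ≤ e * (2 * dd n * (|x|+1)) := by gcongr
    have key : -EE n x ≤ dd n * ((|x|+1)^2 + 4 * (|x|+1) * e + 32 * e^2) := by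
      have : 8 * e^2 / n = 8 * (e^2 / n) := by ring
      nlinarith
    have key2 : (|x|+1)^2 + 4 * (|x|+1) * e + 32 * e^2 ≤ 100 * ((1 + x^2) * (1 + e^2)) := by
      rw [← sq_abs x]
      have := abs_nonneg x
      nlinarith [sq_nonneg (|x| - 1), sq_nonneg (e-1), sq_nonneg (|x|+1-e), mul_nonneg (sq_nonneg |x|) (sq_nonneg e)]
    calc gumbelPDF x - gumbelPDF x * Real.exp (EE n x) = gumbelPDF x * (1 - Real.exp (EE n x)) := by ring
      _ ≤ gumbelPDF x * (dd n * (100 * ((1 + x^2) * (1 + e^2)))) := by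
          gcongr
          have := mul_le_mul_of_nonneg_left key2 hd.le
          linarith
      _ = _ := by ring
  · have hf := fmax_nonneg n x
    have hx2 : Real.log n ≤ x^2 := by
      rw [← sq_abs]
      exact (Real.sqrt_le_left (abs_nonneg x)).1 hx.le
    have : 1 ≤ 100 * ((1 + x^2) * (1 + e^2)) * dd n := by
      have h6 : Real.log n ≤ (1 + x^2) * (1 + e^2) := by nlinarith [sq_nonneg e, sq_nonneg x, mul_nonneg (sq_nonneg x) (sq_nonneg e)]
      nlinarith
    nlinarith

lemma E_close {n : ℕ} (h : good n) {x : ℝ} (hx : |x| ≤ Real.sqrt (Real.log n)) :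
    |EE n x - ss n x * (Real.exp (-x) - 1)| ≤
      Real.exp (-x) * (ss n x ^ 2 * 2 + 2 * |ww n x| + 2 * (Real.log n)⁻¹ + 2 * (n:ℝ)⁻¹)
        + 8 * Real.exp (-x)^2 * (n:ℝ)⁻¹ := by
  obtain ⟨hw, hx4⟩ := good_x h hx
  obtain ⟨h1, h2, h3, h4⟩ := h
  have hL := L_pos h1
  obtain ⟨l, u⟩ := E_bounds h1 (by linarith) hw hx4
  have hs := ss_nonneg h1 x
  set s := ss n x
  set e := Real.exp (-x) with he
  have he0 : 0 < e := Real.exp_pos _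
  set w := |ww n x|
  have hw0 : 0 ≤ w := abs_nonneg _
  have es0 : 0 < Real.exp (-s) := Real.exp_pos _
  have es1 : Real.exp (-s) ≤ 1 := by simpa using hs
  have es2 : 1 - s ≤ Real.exp (-s) := by linarith [Real.add_one_le_exp (-s)]
  have es3 : Real.exp (-s) ≤ 1 - s + s^2 := by
    have : 1 + s ≤ Real.exp s := by linarith [Real.add_one_le_exp s]
    rw [Real.exp_neg, inv_le_iff_one_le_mul₀ (Real.exp_pos _)]
    have h0 : 0 ≤ 1 - s + s^2 := by nlinarith
    nlinarith [mul_le_mul_of_nonneg_left this h0, mul_nonneg hs (sq_nonneg s)]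
  have hn0 : (0:ℝ) < n := by positivity
  have hni : 0 < (n:ℝ)⁻¹ := by positivity
  have hLi : 0 < (Real.log n)⁻¹ := by positivity
  have hLi2 : (Real.log n)⁻¹ ≤ 1/2 := by
    rw [inv_le_comm₀ hL (by norm_num)]; linarith
  rw [div_eq_mul_inv] at l u u
  set r := (Real.log n)⁻¹
  set m := (n:ℝ)⁻¹
  have t1 : e * Real.exp (-s) * (1 + 2 * w) ≤ e * (1 - s + s^2 + 2 * w) := by
    rw [mul_assoc]; gcongr; nlinarith
  have t2 : e * (1 - s - w - 2 * r) ≤ e * Real.exp (-s) * ((1 - w) * (1 - 2 * r)) := by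
    rw [mul_assoc]; gcongr
    have : 1 - w - 2 * r ≤ (1 - w) * (1 - 2 * r) := by nlinarith
    nlinarith [mul_le_mul_of_nonneg_left this es0.le]
  have p1 := mul_pos he0 hni
  have p2 := mul_pos he0 hLi
  have p3 := mul_nonneg he0.le hw0
  have p4 := mul_nonneg he0.le (sq_nonneg s)
  have p5 := mul_pos (pow_pos he0 2) hni
  rw [abs_le]
  constructor
  · nlinarith
  · nlinarith

lemma sdd (x : ℝ) : Tendsto (fun n => ss n x / dd n) atTop (nhds 1) := by
  have h := (((tendsto_const_nhds (x := x)).div_atTop cc_top).sub_const 1).pow 2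
  norm_num at h
  refine h.congr' ?_
  filter_upwards [ev_good] with n hn
  obtain ⟨h1, h2, h3, h4⟩ := hn
  have := L_pos h1
  unfold ss dd
  field_simp

lemma E_lim (x : ℝ) : Tendsto (fun n => EE n x / dd n) atTop (nhds (Real.exp (-x) - 1)) := by
  have hci : Tendsto (fun n => (cc n)⁻¹) atTop (nhds 0) := tendsto_inv_atTop_zero.comp cc_top
  have hci2 : Tendsto (fun n => 4 * (cc n)⁻¹ ^ 2) atTop (nhds 0) := by
    simpa using (hci.pow 2).const_mul 4
  have hs := sdd x
  have hs2 : Tendsto (fun n => ss n x ^ 2 / dd n) atTop (nhds 0) := by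
    have := (hs.mul hs).mul dd_zero
    simp only [mul_zero] at this
    refine this.congr' ?_
    filter_upwards [ev_good] with n hn
    have := dd_pos hn
    field_simp
  have hw : Tendsto (fun n => |ww n x| / dd n) atTop (nhds 0) := by
    have h := ((((tendsto_const_nhds (x := x)).div_atTop cc_top).sub_const 1).mul hci).abs.const_mul 2
    simp only [mul_zero, abs_zero] at h
    refine h.congr' ?_
    filter_upwards [ev_good] with n hn
    have hd := dd_pos hn
    obtain ⟨h1, h2, h3, h4⟩ := hn
    have := L_pos h1
    rw [← abs_of_pos hd, ← abs_div, ← abs_of_pos (by norm_num : (0:ℝ) < 2), ← abs_mul]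
    congr 1
    unfold ww dd
    field_simp
    ring
  have hl : Tendsto (fun n : ℕ => (Real.log n)⁻¹ / dd n) atTop (nhds 0) := by
    refine hci2.congr' ?_
    filter_upwards [ev_good] with n hn
    obtain ⟨h1, h2, h3, h4⟩ := hn
    have := L_pos h1
    unfold dd
    field_simp
  have hn : Tendsto (fun n : ℕ => (n:ℝ)⁻¹ / dd n) atTop (nhds 0) := by
    have h1 : Tendsto (fun y : ℝ => Real.log y / y) atTop (nhds 0) :=
      (Real.isLittleO_log_id_atTop).tendsto_div_nhds_zero
    have := hci2.mul (h1.comp tendsto_natCast_atTop_atTop)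
    simp only [mul_zero] at this
    refine this.congr' ?_
    filter_upwards [ev_good] with n hn
    obtain ⟨h1, h2, h3, h4⟩ := hn
    have := L_pos h1
    simp only [Function.comp]
    unfold dd
    field_simp
  have hR := (((((hs2.mul_const 2).add (hw.const_mul 2)).add (hl.const_mul 2)).add (hn.const_mul 2)).const_mul
    (Real.exp (-x))).add (hn.const_mul (8 * Real.exp (-x)^2))
  simp only [mul_zero, zero_mul, add_zero] at hR
  have hdiff : Tendsto (fun n => EE n x / dd n - ss n x / dd n * (Real.exp (-x) - 1)) atTop (nhds 0) := by
    refine squeeze_zero_norm' ?_ hR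
    filter_upwards [ev_good, ev_x x] with n hg hx
    have hd := dd_pos hg
    have := E_close hg hx
    have e1 : EE n x / dd n - ss n x / dd n * (Real.exp (-x) - 1)
        = (EE n x - ss n x * (Real.exp (-x) - 1)) / dd n := by ring
    rw [e1, Real.norm_eq_abs, abs_div, abs_of_pos hd, div_le_iff₀ hd]
    refine this.trans (le_of_eq ?_)
    field_simp
  have := hdiff.add (hs.mul_const (Real.exp (-x) - 1))
  simpa using this

lemma pointwise (x : ℝ) : Tendsto (fun n => max (gumbelPDF x - fmax n x) 0 / dd n) atTop
    (nhds (max (gumbelPDF x * (1 - Real.exp (-x))) 0)) := by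
  have hE := E_lim x
  have hE0 : Tendsto (fun n => EE n x) atTop (nhds 0) := by
    have := hE.mul dd_zero
    simp only [mul_zero] at this
    refine this.congr' ?_
    filter_upwards [ev_good] with n hn
    have := dd_pos hn
    field_simp
  have hq : Tendsto (fun n => (Real.exp (EE n x) - 1 - EE n x) / dd n) atTop (nhds 0) := by
    have h2 := (hE.mul hE0).abs
    simp only [mul_zero, abs_zero] at h2
    refine squeeze_zero_norm' ?_ h2
    have hE1 : ∀ᶠ n in atTop, |EE n x| ≤ 1 := by
      have := hE0.abs
      rw [abs_zero] at this
      exact this.eventually_le_const (by norm_num)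
    filter_upwards [ev_good, hE1] with n hn h1
    have hd := dd_pos hn
    rw [Real.norm_eq_abs, abs_div, abs_of_pos hd, div_le_iff₀ hd]
    refine (Real.abs_exp_sub_one_sub_id_le h1).trans (le_of_eq ?_)
    rw [abs_mul, abs_div, abs_of_pos hd, ← sq_abs]
    field_simp
  have h3 := (((hq.add hE).const_mul (-gumbelPDF x)).max (tendsto_const_nhds (x := (0:ℝ))))
  have e : -gumbelPDF x * (0 + (Real.exp (-x) - 1)) = gumbelPDF x * (1 - Real.exp (-x)) := by ring
  rw [e] at h3
  refine h3.congr' ?_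
  filter_upwards [ev_good, ev_x x] with n hg hx
  have hd := dd_pos hg
  obtain ⟨hw, hx4⟩ := good_x hg hx
  rw [fmax_eq hg.1 x (q_half hg.1 (by linarith [hg.2.1]) hw hx4).2, ← max_div_div_right hd.le, zero_div]
  congr 1
  ring

lemma int_lim : Tendsto (fun n => ∫ x, max (gumbelPDF x - fmax n x) 0 / dd n) atTop
    (nhds (Real.exp (-1))) := by
  rw [← lim_integral]
  refine tendsto_integral_filter_of_dominated_convergence
    (fun x => 100 * (gumbelPDF x * ((1 + x^2) * (1 + Real.exp (-x)^2)))) ?_ ?_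
    (dom_int.const_mul 100) (Eventually.of_forall pointwise)
  · filter_upwards [ev_good] with n hn
    exact ((((g_int.1.sub (fmax_int hn.1).1).pos_part).div_const _)).aestronglyMeasurable
  · filter_upwards [ev_good] with n hn
    refine Eventually.of_forall fun x => ?_
    have hd := dd_pos hn
    rw [Real.norm_of_nonneg (by positivity)]
    exact domination hn x

lemma tv_eq {n : ℕ} (hn : good n) :
    ∫ x, |fmax n x - gumbelPDF x| = 2 * dd n * ∫ x, max (gumbelPDF x - fmax n x) 0 / dd n := by
  have hd := dd_pos hn
  obtain ⟨fi, f1⟩ := fmax_int hn.1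
  obtain ⟨gi, g1⟩ := g_int
  have h : ∀ x, |fmax n x - gumbelPDF x| =
      2 * max (gumbelPDF x - fmax n x) 0 + (fmax n x - gumbelPDF x) := by
    intro x
    rcases le_total (gumbelPDF x) (fmax n x) with h | h
    · rw [abs_of_nonneg (by linarith), max_eq_right (by linarith)]; ring
    · rw [abs_of_nonpos (by linarith), max_eq_left (by linarith)]; ring
  have hp : Integrable (fun x => max (gumbelPDF x - fmax n x) 0) := (gi.sub fi).pos_part
  simp_rw [h]
  have hfg : Integrable (fun x => fmax n x - gumbelPDF x) := fi.sub gi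
  rw [integral_add (hp.const_mul 2) hfg, integral_sub fi gi, f1, g1, integral_const_mul, integral_div]
  field_simp
  ring

/-- The total variation distance between the law of the normalized Gaussian maximum
`Y_n` and the standard Gumbel distribution is `(log log n)²/(8 e log n) · (1 + o(1))`. -/
theorem tv_gumbel_max_gaussian :
    Tendsto (fun n : ℕ =>
        (∫ x : ℝ, |fmax n x - gumbelPDF x|) /
          ((Real.log (Real.log n)) ^ 2 / (8 * Real.exp 1 * Real.log n)))
      atTop (nhds 1) := by
  have hll : Tendsto (fun n : ℕ => Real.log (Real.log n)) atTop atTop :=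
    Real.tendsto_log_atTop.comp logn_top
  have h1 := (((tendsto_const_nhds (x := Real.log (4 * Real.pi))).div_atTop hll).const_add 1).pow 2
  have h2 := (int_lim.const_mul (Real.exp 1)).mul h1
  have e : Real.exp 1 * Real.exp (-1) * (1 + 0)^2 = 1 := by
    rw [← Real.exp_add]; norm_num
  rw [e] at h2
  refine h2.congr' ?_
  filter_upwards [ev_good, hll.eventually_gt_atTop 0] with n hn hl
  rw [tv_eq hn]
  have hL := L_pos hn.1
  generalize ∫ x, max (gumbelPDF x - fmax n x) 0 / dd n = I
  unfold dd cc
  field_simp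
  ring
end
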